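/- Let ψ₃(w,z,x,y) = −(2σ/3)(wx+zy)^{−3} + (y/w)²(wx+zy)^{−1}. Then ψ₃ satisfies the curved wave equation ψ_{xw} + ψ_{yz} + 2σ(wx+zy)^{−3}(z²ψ_{xx} + w²ψ_{yy} − 2wzψ_{xy}) = 0 on the region where w ≠ 0 and wx+zy ≠ 0. -/

import Mathlib

/-- Partial derivative with respect to the first variable `w`. -/
noncomputable def pw (f : ℂ → ℂ → ℂ → ℂ → ℂ) : ℂ → ℂ → ℂ → ℂ → ℂ :=
  fun w z x y => deriv (fun t => f t z x y) w

/-- Partial derivative with respect to the second variable `z`. -/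
noncomputable def pz (f : ℂ → ℂ → ℂ → ℂ → ℂ) : ℂ → ℂ → ℂ → ℂ → ℂ :=
  fun w z x y => deriv (fun t => f w t x y) z

/-- Partial derivative with respect to the third variable `x`. -/
noncomputable def px (f : ℂ → ℂ → ℂ → ℂ → ℂ) : ℂ → ℂ → ℂ → ℂ → ℂ :=
  fun w z x y => deriv (fun t => f w z t y) x

/-- Partial derivative with respect to the fourth variable `y`. -/
noncomputable def py (f : ℂ → ℂ → ℂ → ℂ → ℂ) : ℂ → ℂ → ℂ → ℂ → ℂ :=
  fun w z x y => deriv (fun t => f w z x t) y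

/-- The profile `A (wx + zy)⁻³ + (y / w)² (wx + zy)⁻¹`. -/
noncomputable def waveProfile (A : ℂ) : ℂ → ℂ → ℂ → ℂ → ℂ := fun w z x y =>
  A / (w * x + z * y) ^ 3 + (y / w) ^ 2 / (w * x + z * y)

lemma hasDerivAt_quadratic_w (w z x y : ℂ) :
    HasDerivAt (fun t => t * x + z * y) x w := by
  simpa using ((hasDerivAt_id w).mul_const x).add_const (z * y)

lemma hasDerivAt_quadratic_z (w z x y : ℂ) :
    HasDerivAt (fun t => w * x + t * y) y z := by
  simpa using ((hasDerivAt_id z).mul_const y).const_add (w * x)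

lemma hasDerivAt_quadratic_x (w z x y : ℂ) :
    HasDerivAt (fun t => w * t + z * y) w x := by
  simpa using ((hasDerivAt_id x).const_mul w).add_const (z * y)

lemma hasDerivAt_quadratic_y (w z x y : ℂ) :
    HasDerivAt (fun t => w * x + z * t) z y := by
  simpa using ((hasDerivAt_id y).const_mul z).const_add (w * x)

lemma pw_waveProfile (A w z x y : ℂ) (hw : w ≠ 0) (h : w * x + z * y ≠ 0) :
    pw (waveProfile A) w z x y =
      -(3 * A * x) / (w * x + z * y) ^ 4 - 2 * y ^ 2 / (w ^ 3 * (w * x + z * y)) -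
        y ^ 2 * x / (w ^ 2 * (w * x + z * y) ^ 2) := by
  unfold pw waveProfile
  rw [show (fun t => A / (t * x + z * y) ^ 3 + (y / t) ^ 2 / (t * x + z * y)) =
      fun t => A / (t * x + z * y) ^ 3 + y ^ 2 / (t ^ 2 * (t * x + z * y)) by
    funext t
    rw [div_pow, div_div]]
  refine (((hasDerivAt_const w A).div ((hasDerivAt_quadratic_w w z x y).pow 3) (by simp [h])).add
      ((hasDerivAt_const w (y ^ 2)).div
        (((hasDerivAt_id w).pow 2).mul (hasDerivAt_quadratic_w w z x y))
        (by simp [hw, h]))).deriv.trans ?_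
  simp
  field_simp
  ring

lemma pz_waveProfile (A w z x y : ℂ) (hw : w ≠ 0) (h : w * x + z * y ≠ 0) :
    pz (waveProfile A) w z x y =
      -(3 * A * y) / (w * x + z * y) ^ 4 - y ^ 3 / (w ^ 2 * (w * x + z * y) ^ 2) := by
  unfold pz waveProfile
  rw [show (fun t => A / (w * x + t * y) ^ 3 + (y / w) ^ 2 / (w * x + t * y)) =
      fun t => A / (w * x + t * y) ^ 3 + y ^ 2 / (w ^ 2 * (w * x + t * y)) by
    funext t
    rw [div_pow, div_div]]
  refine (((hasDerivAt_const z A).div ((hasDerivAt_quadratic_z w z x y).pow 3) (by simp [h])).add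
      ((hasDerivAt_const z (y ^ 2)).div
        ((hasDerivAt_const z (w ^ 2)).mul (hasDerivAt_quadratic_z w z x y))
        (by simp [hw, h]))).deriv.trans ?_
  simp
  field_simp
  ring

lemma px_waveProfile (A w z x y : ℂ) (hw : w ≠ 0) (h : w * x + z * y ≠ 0) :
    px (waveProfile A) w z x y =
      -(3 * A * w) / (w * x + z * y) ^ 4 - y ^ 2 / (w * (w * x + z * y) ^ 2) := by
  unfold px waveProfile
  rw [show (fun t => A / (w * t + z * y) ^ 3 + (y / w) ^ 2 / (w * t + z * y)) =
      fun t => A / (w * t + z * y) ^ 3 + y ^ 2 / (w ^ 2 * (w * t + z * y)) by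
    funext t
    rw [div_pow, div_div]]
  refine (((hasDerivAt_const x A).div ((hasDerivAt_quadratic_x w z x y).pow 3) (by simp [h])).add
      ((hasDerivAt_const x (y ^ 2)).div
        ((hasDerivAt_const x (w ^ 2)).mul (hasDerivAt_quadratic_x w z x y))
        (by simp [hw, h]))).deriv.trans ?_
  simp
  field_simp
  ring

lemma py_waveProfile (A w z x y : ℂ) (hw : w ≠ 0) (h : w * x + z * y ≠ 0) :
    py (waveProfile A) w z x y =
      -(3 * A * z) / (w * x + z * y) ^ 4 + 2 * y / (w ^ 2 * (w * x + z * y)) -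
        y ^ 2 * z / (w ^ 2 * (w * x + z * y) ^ 2) := by
  unfold py waveProfile
  rw [show (fun t => A / (w * x + z * t) ^ 3 + (t / w) ^ 2 / (w * x + z * t)) =
      fun t => A / (w * x + z * t) ^ 3 + t ^ 2 / (w ^ 2 * (w * x + z * t)) by
    funext t
    rw [div_pow, div_div]]
  refine (((hasDerivAt_const y A).div ((hasDerivAt_quadratic_y w z x y).pow 3) (by simp [h])).add
      (((hasDerivAt_id y).pow 2).div
        ((hasDerivAt_const y (w ^ 2)).mul (hasDerivAt_quadratic_y w z x y))
        (by simp [hw, h]))).deriv.trans ?_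
  simp
  field_simp
  ring

lemma px_pw_waveProfile (A w z x y : ℂ) (hw : w ≠ 0) (h : w * x + z * y ≠ 0) :
    px (pw (waveProfile A)) w z x y =
      -(3 * A) / (w * x + z * y) ^ 4 + 12 * A * x * w / (w * x + z * y) ^ 5 +
        y ^ 2 / (w ^ 2 * (w * x + z * y) ^ 2) + 2 * y ^ 2 * x / (w * (w * x + z * y) ^ 3) := by
  have he : (fun t => pw (waveProfile A) w z t y) =ᶠ[nhds x]
      fun t => -(3 * A * t) / (w * t + z * y) ^ 4 - 2 * y ^ 2 / (w ^ 3 * (w * t + z * y)) -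
        y ^ 2 * t / (w ^ 2 * (w * t + z * y) ^ 2) := by
    filter_upwards [(hasDerivAt_quadratic_x w z x y).continuousAt.eventually_ne h] with t ht
    exact pw_waveProfile A w z t y hw ht
  refine he.deriv_eq.trans ?_
  refine (((((((hasDerivAt_const x 3).mul (hasDerivAt_const x A)).mul (hasDerivAt_id x)).neg).div
    ((hasDerivAt_quadratic_x w z x y).pow 4) (by simp [h])).sub
      (((hasDerivAt_const x 2).mul (hasDerivAt_const x (y ^ 2))).div
        ((hasDerivAt_const x (w ^ 3)).mul (hasDerivAt_quadratic_x w z x y)) (by simp [hw, h]))).sub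
      (((hasDerivAt_const x (y ^ 2)).mul (hasDerivAt_id x)).div
        ((hasDerivAt_const x (w ^ 2)).mul ((hasDerivAt_quadratic_x w z x y).pow 2))
        (by simp [hw, h]))).deriv.trans ?_
  simp
  field_simp
  ring

lemma py_pz_waveProfile (A w z x y : ℂ) (hw : w ≠ 0) (h : w * x + z * y ≠ 0) :
    py (pz (waveProfile A)) w z x y =
      -(3 * A) / (w * x + z * y) ^ 4 + 12 * A * y * z / (w * x + z * y) ^ 5 -
        3 * y ^ 2 / (w ^ 2 * (w * x + z * y) ^ 2) +
        2 * y ^ 3 * z / (w ^ 2 * (w * x + z * y) ^ 3) := by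
  have he : (fun t => pz (waveProfile A) w z x t) =ᶠ[nhds y]
      fun t => -(3 * A * t) / (w * x + z * t) ^ 4 - t ^ 3 / (w ^ 2 * (w * x + z * t) ^ 2) := by
    filter_upwards [(hasDerivAt_quadratic_y w z x y).continuousAt.eventually_ne h] with t ht
    exact pz_waveProfile A w z x t hw ht
  refine he.deriv_eq.trans ?_
  refine ((((((hasDerivAt_const y 3).mul (hasDerivAt_const y A)).mul (hasDerivAt_id y)).neg).div
    ((hasDerivAt_quadratic_y w z x y).pow 4) (by simp [h])).sub
      (((hasDerivAt_id y).pow 3).div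
        ((hasDerivAt_const y (w ^ 2)).mul ((hasDerivAt_quadratic_y w z x y).pow 2))
        (by simp [hw, h]))).deriv.trans ?_
  simp
  field_simp
  ring

lemma px_px_waveProfile (A w z x y : ℂ) (hw : w ≠ 0) (h : w * x + z * y ≠ 0) :
    px (px (waveProfile A)) w z x y =
      12 * A * w ^ 2 / (w * x + z * y) ^ 5 + 2 * y ^ 2 / (w * x + z * y) ^ 3 := by
  have he : (fun t => px (waveProfile A) w z t y) =ᶠ[nhds x]
      fun t => -(3 * A * w) / (w * t + z * y) ^ 4 - y ^ 2 / (w * (w * t + z * y) ^ 2) := by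
    filter_upwards [(hasDerivAt_quadratic_x w z x y).continuousAt.eventually_ne h] with t ht
    exact px_waveProfile A w z t y hw ht
  refine he.deriv_eq.trans ?_
  refine ((((((hasDerivAt_const x 3).mul (hasDerivAt_const x A)).mul (hasDerivAt_const x w)).neg).div
        ((hasDerivAt_quadratic_x w z x y).pow 4) (by simp [h])).sub
      ((hasDerivAt_const x (y ^ 2)).div
        ((hasDerivAt_const x w).mul ((hasDerivAt_quadratic_x w z x y).pow 2))
        (by simp [hw, h]))).deriv.trans ?_
  simp
  field_simp
  ring

lemma py_py_waveProfile (A w z x y : ℂ) (hw : w ≠ 0) (h : w * x + z * y ≠ 0) :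
    py (py (waveProfile A)) w z x y =
      12 * A * z ^ 2 / (w * x + z * y) ^ 5 + 2 / (w ^ 2 * (w * x + z * y)) -
        4 * y * z / (w ^ 2 * (w * x + z * y) ^ 2) +
        2 * y ^ 2 * z ^ 2 / (w ^ 2 * (w * x + z * y) ^ 3) := by
  have he : (fun t => py (waveProfile A) w z x t) =ᶠ[nhds y]
      fun t => -(3 * A * z) / (w * x + z * t) ^ 4 + 2 * t / (w ^ 2 * (w * x + z * t)) -
        t ^ 2 * z / (w ^ 2 * (w * x + z * t) ^ 2) := by
    filter_upwards [(hasDerivAt_quadratic_y w z x y).continuousAt.eventually_ne h] with t ht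
    exact py_waveProfile A w z x t hw ht
  refine he.deriv_eq.trans ?_
  refine (((((((hasDerivAt_const y 3).mul (hasDerivAt_const y A)).mul (hasDerivAt_const y z)).neg).div
        ((hasDerivAt_quadratic_y w z x y).pow 4) (by simp [h])).add
      (((hasDerivAt_const y 2).mul (hasDerivAt_id y)).div
        ((hasDerivAt_const y (w ^ 2)).mul (hasDerivAt_quadratic_y w z x y)) (by simp [hw, h]))).sub
      ((((hasDerivAt_id y).pow 2).mul (hasDerivAt_const y z)).div
        ((hasDerivAt_const y (w ^ 2)).mul ((hasDerivAt_quadratic_y w z x y).pow 2))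
        (by simp [hw, h]))).deriv.trans ?_
  simp
  field_simp
  ring

lemma px_py_waveProfile (A w z x y : ℂ) (hw : w ≠ 0) (h : w * x + z * y ≠ 0) :
    px (py (waveProfile A)) w z x y =
      12 * A * w * z / (w * x + z * y) ^ 5 - 2 * y / (w * (w * x + z * y) ^ 2) +
        2 * y ^ 2 * z / (w * (w * x + z * y) ^ 3) := by
  have he : (fun t => py (waveProfile A) w z t y) =ᶠ[nhds x]
      fun t => -(3 * A * z) / (w * t + z * y) ^ 4 + 2 * y / (w ^ 2 * (w * t + z * y)) -
        y ^ 2 * z / (w ^ 2 * (w * t + z * y) ^ 2) := by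
    filter_upwards [(hasDerivAt_quadratic_x w z x y).continuousAt.eventually_ne h] with t ht
    exact py_waveProfile A w z t y hw ht
  refine he.deriv_eq.trans ?_
  refine (((((((hasDerivAt_const x 3).mul (hasDerivAt_const x A)).mul (hasDerivAt_const x z)).neg).div
        ((hasDerivAt_quadratic_x w z x y).pow 4) (by simp [h])).add
      (((hasDerivAt_const x 2).mul (hasDerivAt_const x y)).div
        ((hasDerivAt_const x (w ^ 2)).mul (hasDerivAt_quadratic_x w z x y)) (by simp [hw, h]))).sub
      (((hasDerivAt_const x (y ^ 2)).mul (hasDerivAt_const x z)).div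
        ((hasDerivAt_const x (w ^ 2)).mul ((hasDerivAt_quadratic_x w z x y).pow 2))
        (by simp [hw, h]))).deriv.trans ?_
  simp
  field_simp
  ring

/-- ψ₃ = −(2σ/3)(wx+zy)⁻³ + (y/w)²(wx+zy)⁻¹ satisfies the curved wave
equation on the Sparling–Tod background, where w ≠ 0 and wx+zy ≠ 0. -/
theorem curved_wave_sparlingTod_psi3 (σ : ℂ) (w z x y : ℂ)
    (hw : w ≠ 0) (h : w * x + z * y ≠ 0) :
    let ψ : ℂ → ℂ → ℂ → ℂ → ℂ := fun w z x y =>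
      -(2 * σ / 3) / (w * x + z * y) ^ 3 + (y / w) ^ 2 / (w * x + z * y)
    px (pw ψ) w z x y + py (pz ψ) w z x y
      + 2 * σ / (w * x + z * y) ^ 3 *
        (z ^ 2 * px (px ψ) w z x y + w ^ 2 * py (py ψ) w z x y
          - 2 * w * z * px (py ψ) w z x y) = 0 := by
  intro ψ
  have hψ : ψ = waveProfile (-(2 * σ / 3)) := rfl
  rw [hψ, px_pw_waveProfile _ w z x y hw h, py_pz_waveProfile _ w z x y hw h,
    px_px_waveProfile _ w z x y hw h, py_py_waveProfile _ w z x y hw h,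
    px_py_waveProfile _ w z x y hw h]
  field_simp
  ring
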